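/- arXiv:0710.0106 — 2 statements merged into one kernel-verified Lean document; each statement's English description precedes it below -/
import Mathlib

section
/- Let X be a real linear space, (Y, N) a fuzzy Banach space, (Z, N′) a fuzzy normed space, and φ : X × X → Z with φ(2x, 2y) = α · φ(x, y) for all x, y ∈ X, where 0 < |α| < 2. Let f : X → Y satisfy f(0) = 0 and N (f(x+y) + f(x−y) − 2f(x) − 2f(y)) t ≥ N′ (φ(x, y)) t for all x, y ∈ X and all t > 0. Then there exist unique mappings T, Q : X → Y such that T is additive, Q is quadratic, and N (f(x) − T(x) − Q(x)) t ≥ M x (min {(2 − |α|)/8, (4 − |α|)/32} · t) for all x ∈ X and t > 0, where M x t = min {N′ (φ(x,x)) (t/3), N′ (φ(−x,−x)) (t/3), N′ (φ(x,0)) (t/3), N′ (φ(0,x)) (t/3), N′ (φ(−x,0)) (t/3), N′ (φ(0,−x)) (t/3)}. -/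
/-!
The additive part is forced to vanish: putting `x = 0` in the quadratic equation shows that the odd
part of `f` is itself controlled by `φ (0, ±x)`, which grows like `|α| ^ n` with `|α| < 2` along
`2 ^ n • x`. So `T = 0`, and `Q x` is the fuzzy limit of `4⁻ⁿ • f (2 ^ n • x)`.

Since `f (2x) - 4 f x` is the quadratic defect at `(x, x)`, summing a geometric series gives
`N' (φ (x, x)) s ≤ N (4⁻ᵖ • f (2 ^ p • x) - f x) (s / (4 - |α|))` (`approx_bound`). Applied at
`2 ^ n • x` this yields the Cauchy property, and in the limit it yields an estimate for `f - Q` that is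
stronger than the required one.

For uniqueness, if `(T', Q')` is another pair, then `g = T' + (Q' - Q)` satisfies
`M x (c t / 2) ≤ N (g x) t`. The odd part `T'` of `g` scales by `2 ^ n` and the even part `Q' - Q` by
`4 ^ n` along `2 ^ n • x`, whereas `M` only rescales by `|α| ^ n`; hence both parts vanish.
-/

open Filter Finset

/-- A fuzzy norm on a real vector space, following Bag–Samanta. -/
structure IsFuzzyNorm {X : Type*} [AddCommGroup X] [Module ℝ X] (N : X → ℝ → ℝ) : Prop where
  nonneg : ∀ (x : X) (t : ℝ), 0 ≤ N x t
  le_one : ∀ (x : X) (t : ℝ), N x t ≤ 1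
  eq_zero_of_nonpos : ∀ (x : X) (c : ℝ), c ≤ 0 → N x c = 0
  eq_zero_iff : ∀ x : X, x = 0 ↔ ∀ c : ℝ, 0 < c → N x c = 1
  smul_eq : ∀ (c : ℝ) (x : X) (t : ℝ), c ≠ 0 → N (c • x) t = N x (t / |c|)
  min_le_add : ∀ (x y : X) (s t : ℝ), min (N x s) (N y t) ≤ N (x + y) (s + t)
  mono : ∀ x : X, Monotone (N x)
  tendsto_one : ∀ x : X, Tendsto (N x) atTop (nhds 1)

/-- Convergence of a sequence to a fuzzy limit in a fuzzy normed space. -/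
def FuzzyTendsto {X : Type*} [AddCommGroup X] [Module ℝ X] (N : X → ℝ → ℝ)
    (xs : ℕ → X) (x : X) : Prop :=
  ∀ t : ℝ, 0 < t → Tendsto (fun n => N (xs n - x) t) atTop (nhds 1)

/-- Cauchy sequences in a fuzzy normed space. -/
def FuzzyCauchy {X : Type*} [AddCommGroup X] [Module ℝ X] (N : X → ℝ → ℝ)
    (xs : ℕ → X) : Prop :=
  ∀ ε : ℝ, 0 < ε → ∀ t : ℝ, 0 < t → ∃ n₀ : ℕ, ∀ n ≥ n₀, ∀ p : ℕ, 0 < p →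
    1 - ε < N (xs (n + p) - xs n) t

/-- A fuzzy normed space is complete (a fuzzy Banach space) if every Cauchy
sequence converges. -/
def IsFuzzyComplete {X : Type*} [AddCommGroup X] [Module ℝ X] (N : X → ℝ → ℝ) : Prop :=
  ∀ xs : ℕ → X, FuzzyCauchy N xs → ∃ x : X, FuzzyTendsto N xs x

/-- Quadratic functional equation. -/
def IsQuadratic {X Y : Type*} [AddCommGroup X] [AddCommGroup Y] (Q : X → Y) : Prop :=
  ∀ x y : X, Q (x + y) + Q (x - y) = 2 • Q x + 2 • Q y

/-- Additive functional equation. -/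
def IsAdditive {X Y : Type*} [AddCommGroup X] [AddCommGroup Y] (T : X → Y) : Prop :=
  ∀ x y : X, T (x + y) = T x + T y

/-- The control function `M` of Theorem 3.3. -/
noncomputable def Mctrl {X Z : Type*} [AddCommGroup X] (N' : Z → ℝ → ℝ) (φ : X × X → Z) (x : X) (t : ℝ) : ℝ :=
  min (min (min (N' (φ (x, x)) (t / 3)) (N' (φ (-x, -x)) (t / 3)))
      (min (N' (φ (x, 0)) (t / 3)) (N' (φ (0, x)) (t / 3))))
    (min (N' (φ (-x, 0)) (t / 3)) (N' (φ (0, -x)) (t / 3)))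

section FuzzyNorm

variable {Y : Type*} [AddCommGroup Y] [Module ℝ Y] {N : Y → ℝ → ℝ}

lemma IsFuzzyNorm.neg_eq (hN : IsFuzzyNorm N) (x : Y) (t : ℝ) : N (-x) t = N x t := by
  have h := hN.smul_eq (-1) x t (by norm_num)
  simpa using h

lemma IsFuzzyNorm.zero_eq (hN : IsFuzzyNorm N) {t : ℝ} (ht : 0 < t) : N 0 t = 1 :=
  (hN.eq_zero_iff 0).1 rfl t ht

lemma IsFuzzyNorm.sub_comm_eq (hN : IsFuzzyNorm N) (x y : Y) (t : ℝ) :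
    N (x - y) t = N (y - x) t := by
  rw [← hN.neg_eq, neg_sub]

/-- A vector vanishes as soon as each `N y t`, `t > 0`, dominates a sequence tending to `1`. -/
lemma IsFuzzyNorm.eq_zero_of_le (hN : IsFuzzyNorm N) (y : Y) (u : ℝ → ℕ → ℝ)
    (hu : ∀ t, 0 < t → Tendsto (u t) atTop (nhds 1))
    (hle : ∀ t, 0 < t → ∀ n, u t n ≤ N y t) : y = 0 :=
  (hN.eq_zero_iff y).2 fun t ht =>
    le_antisymm (hN.le_one y t) (le_of_tendsto' (hu t ht) (hle t ht))

lemma FuzzyTendsto.of_le (hN : IsFuzzyNorm N) {xs : ℕ → Y} {x : Y} (u : ℝ → ℕ → ℝ)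
    (hu : ∀ t, 0 < t → Tendsto (u t) atTop (nhds 1))
    (hle : ∀ t, 0 < t → ∀ n, u t n ≤ N (xs n - x) t) : FuzzyTendsto N xs x := fun t ht =>
  tendsto_of_tendsto_of_tendsto_of_le_of_le (hu t ht) tendsto_const_nhds (hle t ht)
    fun _ => hN.le_one _ _

lemma FuzzyTendsto.add (hN : IsFuzzyNorm N) {xs ys : ℕ → Y} {x y : Y}
    (hx : FuzzyTendsto N xs x) (hy : FuzzyTendsto N ys y) :
    FuzzyTendsto N (fun n => xs n + ys n) (x + y) := by
  refine .of_le hN (fun t n => min (N (xs n - x) (t / 2)) (N (ys n - y) (t / 2))) ?_ ?_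
  · intro t ht
    simpa using (hx (t / 2) (by positivity)).min (hy (t / 2) (by positivity))
  · intro t _ n
    have h := hN.min_le_add (xs n - x) (ys n - y) (t / 2) (t / 2)
    rwa [add_halves, sub_add_sub_comm] at h

lemma FuzzyTendsto.smul (hN : IsFuzzyNorm N) {xs : ℕ → Y} {x : Y} (c : ℝ) (hc : c ≠ 0)
    (hx : FuzzyTendsto N xs x) : FuzzyTendsto N (fun n => c • xs n) (c • x) := by
  intro t ht
  simp only [← smul_sub, hN.smul_eq c _ _ hc]
  exact hx _ (by positivity)

lemma FuzzyTendsto.unique (hN : IsFuzzyNorm N) {xs : ℕ → Y} {x y : Y}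
    (hx : FuzzyTendsto N xs x) (hy : FuzzyTendsto N xs y) : x = y := by
  rw [← sub_eq_zero]
  refine hN.eq_zero_of_le _ (fun t n => min (N (xs n - x) (t / 2)) (N (xs n - y) (t / 2))) ?_ ?_
  · intro t ht
    simpa using (hx (t / 2) (by positivity)).min (hy (t / 2) (by positivity))
  · intro t _ n
    have h := hN.min_le_add (x - xs n) (xs n - y) (t / 2) (t / 2)
    rwa [add_halves, sub_add_sub_cancel, hN.sub_comm_eq x] at h

/-- A lower bound for `N (xs n - y)` at time `s`, uniform in `n`, passes to the limit at any
strictly later time. -/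
lemma FuzzyTendsto.le_of_lt (hN : IsFuzzyNorm N) {xs : ℕ → Y} {x y : Y}
    (hx : FuzzyTendsto N xs x) {s t b : ℝ} (hst : s < t) (h : ∀ n, b ≤ N (xs n - y) s) :
    b ≤ N (y - x) t := by
  have h0 : 0 < t - s := sub_pos.2 hst
  have hb : b ≤ 1 := (h 0).trans (hN.le_one _ _)
  have hlim : Tendsto (fun n => min b (N (xs n - x) (t - s))) atTop (nhds b) := by
    have := (tendsto_const_nhds (x := b)).min (hx _ h0)
    rwa [min_eq_left hb] at this
  refine le_of_tendsto' hlim fun n => ?_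
  have h1 := hN.min_le_add (y - xs n) (xs n - x) s (t - s)
  rw [sub_add_sub_cancel, add_sub_cancel, hN.sub_comm_eq y] at h1
  exact (min_le_min_right _ (h n)).trans h1

end FuzzyNorm

lemma Mctrl_neg {X Z : Type*} [AddCommGroup X] {N' : Z → ℝ → ℝ} {φ : X × X → Z}
    (x : X) (t : ℝ) : Mctrl N' φ (-x) t = Mctrl N' φ x t := by
  unfold Mctrl
  simp only [neg_neg]
  ac_rfl

section Control

variable {X Z : Type*} [AddCommGroup X] [AddCommGroup Z] [Module ℝ Z] {N' : Z → ℝ → ℝ}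
  {α : ℝ} {φ : X × X → Z}

lemma phi_pow (hφ : ∀ x y : X, φ (2 • x, 2 • y) = α • φ (x, y)) (n : ℕ) (x y : X) :
    φ ((2 ^ n) • x, (2 ^ n) • y) = α ^ n • φ (x, y) := by
  induction n with
  | zero => simp
  | succ n ih =>
    rw [pow_succ', mul_smul, mul_smul, hφ, ih, smul_smul, pow_succ']

lemma norm_phi_pow (hN' : IsFuzzyNorm N') (hα0 : 0 < |α|)
    (hφ : ∀ x y : X, φ (2 • x, 2 • y) = α • φ (x, y)) (n : ℕ) (x y : X) (t : ℝ) :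
    N' (φ ((2 ^ n) • x, (2 ^ n) • y)) t = N' (φ (x, y)) (t / |α| ^ n) := by
  rw [phi_pow hφ, hN'.smul_eq _ _ _ (pow_ne_zero _ (abs_pos.1 hα0)), abs_pow]

lemma Mctrl_pow (hN' : IsFuzzyNorm N') (hα0 : 0 < |α|)
    (hφ : ∀ x y : X, φ (2 • x, 2 • y) = α • φ (x, y)) (n : ℕ) (x : X) (t : ℝ) :
    Mctrl N' φ ((2 ^ n) • x) t = Mctrl N' φ x (t / |α| ^ n) := by
  have h := fun u v : X => norm_phi_pow hN' hα0 hφ n u v (t / 3)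
  have h1 := h x 0
  have h2 := h 0 x
  have h3 := h (-x) 0
  have h4 := h 0 (-x)
  have h5 := h (-x) (-x)
  rw [smul_zero] at h1 h2 h3 h4
  rw [smul_neg] at h3 h4 h5
  unfold Mctrl
  rw [h x x, h1, h2, h3, h4, h5, div_right_comm]

lemma Mctrl_tendsto (hN' : IsFuzzyNorm N') (x : X) :
    Tendsto (Mctrl N' φ x) atTop (nhds 1) := by
  have h3 : Tendsto (fun t : ℝ => t / 3) atTop atTop := tendsto_id.atTop_div_const (by norm_num)
  have h := fun z : Z => (hN'.tendsto_one z).comp h3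
  have := (((h (φ (x, x))).min (h (φ (-x, -x)))).min ((h (φ (x, 0))).min (h (φ (0, x))))).min
    ((h (φ (-x, 0))).min (h (φ (0, -x))))
  simp only [min_self] at this
  exact this

end Control

/-- The rescaled times `k * (b ^ n * t) / a ^ n` blow up when `a < b`. -/
lemma tendsto_time {a b k t : ℝ} (ha : 0 < a) (hab : a < b) (hk : 0 < k) (ht : 0 < t) :
    Tendsto (fun n : ℕ => k * (b ^ n * t) / a ^ n) atTop atTop := by
  have h1 : 1 < b / a := (one_lt_div ha).2 hab
  have h2 := (tendsto_pow_atTop_atTop_of_one_lt h1).const_mul_atTop (mul_pos hk ht)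
  refine h2.congr fun n => ?_
  rw [div_pow]
  ring

lemma IsQuadratic.map_zero {X Y : Type*} [AddCommGroup X] [AddCommGroup Y] [Module ℝ Y]
    {Q : X → Y} (hQ : IsQuadratic Q) : Q 0 = 0 := by
  have h := hQ 0 0
  rw [add_zero, sub_zero, ← two_nsmul, left_eq_add] at h
  have h2 : (2 : ℝ) • Q 0 = 0 := by rw [two_smul, ← two_nsmul, h]
  exact (smul_eq_zero.1 h2).resolve_left (by norm_num)

lemma IsQuadratic.map_neg {X Y : Type*} [AddCommGroup X] [AddCommGroup Y] [Module ℝ Y]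
    {Q : X → Y} (hQ : IsQuadratic Q) (x : X) : Q (-x) = Q x := by
  have h := hQ 0 x
  rw [hQ.map_zero, zero_add, zero_sub, smul_zero, zero_add, two_nsmul] at h
  exact add_left_cancel h

lemma IsQuadratic.map_pow {X Y : Type*} [AddCommGroup X] [AddCommGroup Y] [Module ℝ Y]
    {Q : X → Y} (hQ : IsQuadratic Q) (n : ℕ) (x : X) :
    Q ((2 ^ n) • x) = (4 : ℝ) ^ n • Q x := by
  induction n with
  | zero => simp
  | succ n ih =>
    have h := hQ ((2 ^ n) • x) ((2 ^ n) • x)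
    rw [sub_self, hQ.map_zero, add_zero, ih, ← two_nsmul, smul_smul, ← pow_succ'] at h
    rw [h]
    module

lemma IsAdditive.map_pow {X Y : Type*} [AddCommGroup X] [AddCommGroup Y] [Module ℝ Y]
    {T : X → Y} (hT : IsAdditive T) (n : ℕ) (x : X) :
    T ((2 ^ n) • x) = (2 : ℝ) ^ n • T x := by
  induction n with
  | zero => simp
  | succ n ih => rw [pow_succ', mul_smul, two_nsmul, hT, ih]; module

lemma IsAdditive.map_neg {X Y : Type*} [AddCommGroup X] [AddCommGroup Y]
    {T : X → Y} (hT : IsAdditive T) (x : X) : T (-x) = -T x :=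
  _root_.map_neg (AddMonoidHom.mk' T hT) x

section Approximation

variable {X Y Z : Type*} [AddCommGroup X]
  [AddCommGroup Y] [Module ℝ Y] [AddCommGroup Z] [Module ℝ Z]
  {N : Y → ℝ → ℝ} {N' : Z → ℝ → ℝ} {α : ℝ} {φ : X × X → Z} {f : X → Y}

/-- The `n`-th approximation `4⁻ⁿ f (2ⁿ x)` to the quadratic part of `f`. -/
noncomputable def approx (f : X → Y) (n : ℕ) (x : X) : Y := ((4 : ℝ) ^ n)⁻¹ • f ((2 ^ n) • x)

lemma approx_add (f : X → Y) (n p : ℕ) (x : X) :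
    approx f (n + p) x = ((4 : ℝ) ^ n)⁻¹ • approx f p ((2 ^ n) • x) := by
  unfold approx
  rw [smul_smul, smul_smul, pow_add, mul_inv, pow_add 2 n p, mul_comm (2 ^ n) (2 ^ p)]

/-- The telescoping estimate: the errors of the successive steps form a geometric series of ratio
`|α| / 4`, with sum `1 / (4 - |α|)`. -/
lemma approx_bound (hN : IsFuzzyNorm N) (hN' : IsFuzzyNorm N') (hα0 : 0 < |α|) (hα4 : |α| < 4)
    (hφ : ∀ x y : X, φ (2 • x, 2 • y) = α • φ (x, y)) (hf0 : f 0 = 0)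
    (hineq : ∀ x y : X, ∀ t : ℝ, 0 < t →
      N' (φ (x, y)) t ≤ N (f (x + y) + f (x - y) - 2 • f x - 2 • f y) t)
    (p : ℕ) (x : X) (s : ℝ) (hs : 0 < s) :
    N' (φ (x, x)) s ≤ N (approx f p x - f x) (s / (4 - |α|)) := by
  have h4 : 0 < 4 - |α| := sub_pos.2 hα4
  induction p generalizing x s with
  | zero =>
    have h0 : approx f 0 x - f x = 0 := by simp [approx]
    rw [h0, hN.zero_eq (by positivity)]
    exact hN'.le_one _ _
  | succ p ih =>
    have h1 := ih (2 • x) (s * |α|) (by positivity)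
    have hp := norm_phi_pow hN' hα0 hφ 1 x x (s * |α|)
    rw [pow_one, pow_one, mul_div_cancel_right₀ _ hα0.ne'] at hp
    rw [hp] at h1
    have h2 := hineq x x s hs
    rw [sub_self, hf0, add_zero, ← two_nsmul] at h2
    have h3 := hN.min_le_add (approx f p (2 • x) - f (2 • x))
      (f (2 • x) - 2 • f x - 2 • f x) (s * |α| / (4 - |α|)) s
    have h5 := (le_min h1 h2).trans h3
    have hq : approx f (p + 1) x - f x = (4 : ℝ)⁻¹ •
        (approx f p (2 • x) - f (2 • x) + (f (2 • x) - 2 • f x - 2 • f x)) := by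
      rw [add_comm p 1, approx_add, pow_one, pow_one]
      module
    rw [hq, hN.smul_eq _ _ _ (by norm_num)]
    have ht : s / (4 - |α|) / |(4 : ℝ)⁻¹| = s * |α| / (4 - |α|) + s := by
      rw [abs_of_pos (by norm_num : (0 : ℝ) < 4⁻¹)]
      field_simp
      ring
    rwa [ht]

lemma approx_cauchy (hN : IsFuzzyNorm N) (hN' : IsFuzzyNorm N') (hα0 : 0 < |α|) (hα4 : |α| < 4)
    (hφ : ∀ x y : X, φ (2 • x, 2 • y) = α • φ (x, y)) (hf0 : f 0 = 0)
    (hineq : ∀ x y : X, ∀ t : ℝ, 0 < t →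
      N' (φ (x, y)) t ≤ N (f (x + y) + f (x - y) - 2 • f x - 2 • f y) t) (x : X) :
    FuzzyCauchy N (fun n => approx f n x) := by
  have h4 : 0 < 4 - |α| := sub_pos.2 hα4
  intro ε hε t ht
  have hlim := (hN'.tendsto_one (φ (x, x))).comp (tendsto_time hα0 hα4 h4 ht)
  obtain ⟨n₀, hn₀⟩ := eventually_atTop.1 (hlim.eventually_const_lt (by linarith : 1 - ε < 1))
  refine ⟨n₀, fun n hn p _ => (hn₀ n hn).trans_le ?_⟩
  have h := approx_bound hN hN' hα0 hα4 hφ hf0 hineq p ((2 ^ n) • x)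
    ((4 - |α|) * (4 ^ n * t)) (by positivity)
  rw [norm_phi_pow hN' hα0 hφ, mul_div_cancel_left₀ _ h4.ne'] at h
  have hq : approx f (n + p) x - approx f n x =
      ((4 : ℝ) ^ n)⁻¹ • (approx f p ((2 ^ n) • x) - f ((2 ^ n) • x)) := by
    rw [approx_add, smul_sub]
    rfl
  have ht' : t / |((4 : ℝ) ^ n)⁻¹| = 4 ^ n * t := by
    rw [abs_of_pos (by positivity), div_inv_eq_mul, mul_comm]
  simpa only [hq, hN.smul_eq _ _ _ (inv_ne_zero (pow_ne_zero n (four_ne_zero (α := ℝ)))), ht',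
    Function.comp_apply] using h

/-- The quadratic defect of `approx f n` tends to zero, so the limit is quadratic. -/
lemma quadratic_of_limit (hN : IsFuzzyNorm N) (hN' : IsFuzzyNorm N') (hα0 : 0 < |α|)
    (hα4 : |α| < 4) (hφ : ∀ x y : X, φ (2 • x, 2 • y) = α • φ (x, y))
    (hineq : ∀ x y : X, ∀ t : ℝ, 0 < t →
      N' (φ (x, y)) t ≤ N (f (x + y) + f (x - y) - 2 • f x - 2 • f y) t)
    {Q : X → Y} (hQ : ∀ x, FuzzyTendsto N (fun n => approx f n x) (Q x)) : IsQuadratic Q := by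
  intro x y
  have hlim := (((hQ (x + y)).add hN (hQ (x - y))).add hN
    ((hQ x).smul hN (-2) (by norm_num))).add hN ((hQ y).smul hN (-2) (by norm_num))
  have hzero : FuzzyTendsto N (fun n => approx f n (x + y) + approx f n (x - y) +
      (-2 : ℝ) • approx f n x + (-2 : ℝ) • approx f n y) 0 := by
    refine .of_le hN (fun t n => N' (φ (x, y)) (1 * (4 ^ n * t) / |α| ^ n)) ?_ ?_
    · intro t ht
      exact (hN'.tendsto_one (φ (x, y))).comp (tendsto_time hα0 hα4 one_pos ht)
    · intro t ht n
      have h := hineq ((2 ^ n) • x) ((2 ^ n) • y) (1 * (4 ^ n * t)) (by positivity)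
      rw [norm_phi_pow hN' hα0 hφ, ← smul_add, ← smul_sub] at h
      have hq : approx f n (x + y) + approx f n (x - y) + (-2 : ℝ) • approx f n x +
          (-2 : ℝ) • approx f n y - 0 = ((4 : ℝ) ^ n)⁻¹ • (f ((2 ^ n) • (x + y)) +
            f ((2 ^ n) • (x - y)) - 2 • f ((2 ^ n) • x) - 2 • f ((2 ^ n) • y)) := by
        unfold approx
        module
      have ht' : t / |((4 : ℝ) ^ n)⁻¹| = 1 * (4 ^ n * t) := by
        rw [abs_of_pos (by positivity), div_inv_eq_mul, mul_comm, one_mul]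
      rw [hq, hN.smul_eq _ _ _ (inv_ne_zero (pow_ne_zero n (four_ne_zero (α := ℝ)))), ht']
      exact h
  have h := hlim.unique hN hzero
  rw [← sub_eq_zero, ← h]
  module

/-- If an additive map plus an even map that is homogeneous of degree two along powers of `2` is
controlled by `Mctrl`, then both vanish. -/
lemma parts_eq_zero (hN : IsFuzzyNorm N) (hN' : IsFuzzyNorm N') (hα0 : 0 < |α|) (hα2 : |α| < 2)
    (hφ : ∀ x y : X, φ (2 • x, 2 • y) = α • φ (x, y)) {T R : X → Y} (hT : IsAdditive T)
    (hRneg : ∀ x, R (-x) = R x) (hRpow : ∀ (n : ℕ) x, R ((2 ^ n) • x) = (4 : ℝ) ^ n • R x)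
    {k : ℝ} (hk : 0 < k) (h : ∀ x t, 0 < t → Mctrl N' φ x (k * t) ≤ N (T x + R x) t) (x : X) :
    T x = 0 ∧ R x = 0 := by
  have hT0 : ∀ x, T x = 0 := by
    intro x
    refine hN.eq_zero_of_le _ (fun t n => Mctrl N' φ x (k * (2 ^ n * t) / |α| ^ n)) ?_ ?_
    · intro t ht
      exact (Mctrl_tendsto hN' x).comp (tendsto_time hα0 hα2 hk ht)
    · intro t ht n
      have h1 := h ((2 ^ n) • x) (2 ^ n * t) (by positivity)
      have h2 := h (-((2 ^ n) • x)) (2 ^ n * t) (by positivity)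
      rw [Mctrl_neg, ← hN.neg_eq] at h2
      have h3 := (le_min h1 h2).trans (hN.min_le_add _ _ _ _)
      rw [Mctrl_pow hN' hα0 hφ] at h3
      have hq : T ((2 ^ n) • x) + R ((2 ^ n) • x) +
          -(T (-((2 ^ n) • x)) + R (-((2 ^ n) • x))) = (2 * (2 : ℝ) ^ n) • T x := by
        rw [hRneg, hT.map_neg, hT.map_pow]
        module
      have ht' : (2 ^ n * t + 2 ^ n * t) / |2 * (2 : ℝ) ^ n| = t := by
        rw [abs_of_pos (by positivity)]
        field_simp
        ring
      rwa [hq, hN.smul_eq _ _ _ (by positivity), ht'] at h3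
  refine ⟨hT0 x, ?_⟩
  refine hN.eq_zero_of_le _ (fun t n => Mctrl N' φ x (k * (4 ^ n * t) / |α| ^ n)) ?_ ?_
  · intro t ht
    exact (Mctrl_tendsto hN' x).comp (tendsto_time hα0 (by linarith) hk ht)
  · intro t ht n
    have h1 := h ((2 ^ n) • x) (4 ^ n * t) (by positivity)
    have ht' : 4 ^ n * t / |(4 : ℝ) ^ n| = t := by
      rw [abs_of_pos (by positivity)]
      field_simp
    rwa [Mctrl_pow hN' hα0 hφ, hT0, zero_add, hRpow, hN.smul_eq _ _ _ (by positivity), ht'] at h1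

end Approximation

/-- Theorem 3.3: general fuzzy stability of the quadratic functional equation;
`f` decomposes, up to a fuzzy error controlled by `M`, into a unique additive
part `T` and a unique quadratic part `Q`. -/
theorem fuzzy_general_stability
    {X Y Z : Type*} [AddCommGroup X] [Module ℝ X]
    [AddCommGroup Y] [Module ℝ Y] [AddCommGroup Z] [Module ℝ Z]
    (N : Y → ℝ → ℝ) (N' : Z → ℝ → ℝ)
    (hN : IsFuzzyNorm N) (hYcomplete : IsFuzzyComplete N) (hN' : IsFuzzyNorm N')
    (α : ℝ) (hα0 : 0 < |α|) (hα2 : |α| < 2)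
    (φ : X × X → Z)
    (hφ : ∀ x y : X, φ (2 • x, 2 • y) = α • φ (x, y))
    (f : X → Y) (hf0 : f 0 = 0)
    (hineq : ∀ x y : X, ∀ t : ℝ, 0 < t →
      N' (φ (x, y)) t ≤ N (f (x + y) + f (x - y) - 2 • f x - 2 • f y) t) :
    ∃ T Q : X → Y,
      (IsAdditive T ∧ IsQuadratic Q ∧
        (∀ x : X, ∀ t : ℝ, 0 < t →
          Mctrl N' φ x (min ((2 - |α|) / 8) ((4 - |α|) / 32) * t) ≤ N (f x - T x - Q x) t)) ∧
      ∀ T' Q' : X → Y,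
        (IsAdditive T' ∧ IsQuadratic Q' ∧
          (∀ x : X, ∀ t : ℝ, 0 < t →
            Mctrl N' φ x (min ((2 - |α|) / 8) ((4 - |α|) / 32) * t) ≤ N (f x - T' x - Q' x) t)) →
        T' = T ∧ Q' = Q := by
  have hα4 : |α| < 4 := by linarith
  set c := min ((2 - |α|) / 8) ((4 - |α|) / 32) with hc
  have hc0 : 0 < c := lt_min (by linarith) (by linarith)
  have hc1 : c ≤ (4 - |α|) / 32 := min_le_right _ _
  choose Q hQ using fun x =>
    hYcomplete _ (approx_cauchy hN hN' hα0 hα4 hφ hf0 hineq x)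
  have hQquad : IsQuadratic Q := quadratic_of_limit hN hN' hα0 hα4 hφ hineq hQ
  have hest : ∀ x : X, ∀ t : ℝ, 0 < t → Mctrl N' φ x (c * t) ≤ N (f x - Q x) t := by
    intro x t ht
    have hs : 0 < c * t / 3 := by positivity
    have hM : Mctrl N' φ x (c * t) ≤ N' (φ (x, x)) (c * t / 3) :=
      (min_le_left _ _).trans ((min_le_left _ _).trans (min_le_left _ _))
    have hlt : c * t / 3 / (4 - |α|) < t := by
      rw [div_lt_iff₀ (by linarith)]
      nlinarith
    exact (hQ x).le_of_lt hN hlt fun n =>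
      hM.trans (approx_bound hN hN' hα0 hα4 hφ hf0 hineq n x _ hs)
  refine ⟨fun _ => 0, Q, ⟨fun _ _ => (add_zero 0).symm, hQquad, fun x t ht => ?_⟩, ?_⟩
  · rw [sub_zero]
    exact hest x t ht
  · rintro T' Q' ⟨hT', hQ', hest'⟩
    have key := parts_eq_zero hN hN' hα0 hα2 hφ (R := fun x => Q' x - Q x) hT'
      (fun x => by rw [hQ'.map_neg, hQquad.map_neg])
      (fun n x => by rw [hQ'.map_pow, hQquad.map_pow, smul_sub])
      (k := c / 2) (by positivity) (fun x t ht => by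
        have h1 := hest x (t / 2) (by positivity)
        have h2 := hest' x (t / 2) (by positivity)
        rw [← hN.neg_eq] at h2
        have h3 := (le_min h1 h2).trans (hN.min_le_add _ _ _ _)
        have hq : f x - Q x + -(f x - T' x - Q' x) = T' x + (Q' x - Q x) := by abel
        have hct : c * (t / 2) = c / 2 * t := by ring
        rwa [add_halves, hq, hct] at h3)
    exact ⟨funext fun x => (key x).1, funext fun x => sub_eq_zero.1 (key x).2⟩
end

section
/- Let q > 0, p = 1/q, and let f be a function from a fuzzy normed space (X, N) to a fuzzy normed space (Y, N′) satisfying N′ (f(x+y) + f(x−y) − 2f(x) − 2f(y)) (t + s) ≥ min (N x (t^q)) (N y (s^q)) for all x, y ∈ X and s, t ∈ [0, ∞). Then for every integer n ≥ 1, every x ∈ X and every t > 0, N′ (f(2^n x)/4^n − f(x)) t ≥ N x (t^q / (Σ_{k=1}^{n} 2^(k(p−2)+1))^q). -/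
/-! Taking `x = y` in the hypothesis, and using `f 0 = 0`, gives
`N x (t ^ q) ≤ N' (f (2x) - 4 f x) (2t)`. Substituting `2 ^ k x` for `x`, dividing by `4 ^ (k+1)`
and putting `t = 2 ^ (k p) u`, for which `t ^ q = 2 ^ k u ^ q`, bounds the increment
`f (2 ^ (k+1) x) / 4 ^ (k+1) - f (2 ^ k x) / 4 ^ k` at radius `2 ^ (k (p-2) - 1) u` from below by
`N x (u ^ q)`. Since `p > 0` this radius is at most `2 ^ ((k+1) (p-2) + 1) u` (`increment_bound`).
The increments telescope, so repeated use of the triangle inequality (N4) adds up the radii while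
keeping the bound `N x (u ^ q)`; the claim is the case `u = t / ∑ k, 2 ^ (k (p-2) + 1)`. -/

open Filter Finset

lemma map_zero_of_fuzzy_quadratic
    {X Y : Type*} [AddCommGroup X] [Module ℝ X] [AddCommGroup Y] [Module ℝ Y]
    {N : X → ℝ → ℝ} {N' : Y → ℝ → ℝ} (hN : IsFuzzyNorm N) (hN' : IsFuzzyNorm N')
    {q : ℝ} {f : X → Y}
    (hf : ∀ x y : X, ∀ s t : ℝ, 0 ≤ s → 0 ≤ t →
      min (N x (t ^ q)) (N y (s ^ q)) ≤
        N' (f (x + y) + f (x - y) - 2 • f x - 2 • f y) (t + s)) :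
    f 0 = 0 := by
  have h2 : (-2 : ℝ) • f 0 = 0 := by
    refine (hN'.eq_zero_iff _).2 fun c hc => le_antisymm (hN'.le_one _ _) ?_
    have h := hf 0 0 (c / 2) (c / 2) (by positivity) (by positivity)
    have h1 : N 0 ((c / 2) ^ q) = 1 :=
      (hN.eq_zero_iff 0).1 rfl _ (Real.rpow_pos_of_pos (by positivity) q)
    rw [h1, min_self, add_halves, add_zero, sub_zero] at h
    have he : f 0 + f 0 - 2 • f 0 - 2 • f 0 = (-2 : ℝ) • f 0 := by module
    rwa [he] at h
  exact (smul_eq_zero.1 h2).resolve_left (by norm_num)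

lemma increment_bound
    {X Y : Type*} [AddCommGroup X] [Module ℝ X] [AddCommGroup Y] [Module ℝ Y]
    {N : X → ℝ → ℝ} {N' : Y → ℝ → ℝ} (hN : IsFuzzyNorm N) (hN' : IsFuzzyNorm N')
    {q p : ℝ} (hq : 0 < q) (hp : p = 1 / q) {f : X → Y}
    (hf : ∀ x y : X, ∀ s t : ℝ, 0 ≤ s → 0 ≤ t →
      min (N x (t ^ q)) (N y (s ^ q)) ≤
        N' (f (x + y) + f (x - y) - 2 • f x - 2 • f y) (t + s))
    (k : ℕ) (x : X) {u : ℝ} (hu : 0 < u) :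
    N x (u ^ q) ≤
      N' (((4 : ℝ) ^ (k + 1))⁻¹ • f ((2 : ℝ) ^ (k + 1) • x) - ((4 : ℝ) ^ k)⁻¹ • f ((2 : ℝ) ^ k • x))
        ((2 : ℝ) ^ (((k + 1 : ℕ) : ℝ) * (p - 2) + 1) * u) := by
  have hf0 := map_zero_of_fuzzy_quadratic hN hN' hf
  have hp0 : 0 < p := by rw [hp]; positivity
  set t : ℝ := (2 : ℝ) ^ (k * p) * u with ht
  have ht0 : 0 < t := by positivity
  have htq : t ^ q = u ^ q * 2 ^ k := by
    rw [ht, Real.mul_rpow (by positivity) hu.le, ← Real.rpow_mul (by norm_num), mul_assoc, hp,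
      one_div_mul_cancel hq.ne', mul_one, Real.rpow_natCast, mul_comm]
  have h := hf ((2 : ℝ) ^ k • x) ((2 : ℝ) ^ k • x) t t ht0.le ht0.le
  rw [min_self, hN.smul_eq _ _ _ (by positivity), abs_of_pos (by positivity), htq,
    mul_div_cancel_right₀ _ (by positivity), sub_self, hf0] at h
  have hx : (2 : ℝ) ^ k • x + (2 : ℝ) ^ k • x = (2 : ℝ) ^ (k + 1) • x := by
    rw [pow_succ]; module
  rw [hx] at h
  have hy : ((4 : ℝ) ^ (k + 1))⁻¹ • f ((2 : ℝ) ^ (k + 1) • x)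
        - ((4 : ℝ) ^ k)⁻¹ • f ((2 : ℝ) ^ k • x)
      = ((4 : ℝ) ^ (k + 1))⁻¹ • (f ((2 : ℝ) ^ (k + 1) • x) + 0 - 2 • f ((2 : ℝ) ^ k • x)
        - 2 • f ((2 : ℝ) ^ k • x)) := by
    have h4 : ((4 : ℝ) ^ k)⁻¹ = ((4 : ℝ) ^ (k + 1))⁻¹ * 4 := by
      rw [pow_succ]; field_simp
    rw [h4]; module
  rw [hy, hN'.smul_eq _ _ _ (by positivity), abs_of_pos (by positivity)]
  refine h.trans (hN'.mono _ ?_)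
  have hr : (2 : ℝ) ^ (((k + 1 : ℕ) : ℝ) * (p - 2) + 1)
      = 2 ^ (k * p) * 2 ^ p * 2 * ((4 : ℝ) ^ (k + 1))⁻¹ := by
    have h4 : (4 : ℝ) ^ (k + 1) = (2 : ℝ) ^ (2 * ((k + 1 : ℕ) : ℝ)) := by
      rw [Real.rpow_mul (by norm_num), Real.rpow_natCast]; norm_num
    rw [h4, ← Real.rpow_neg (by norm_num)]
    rw [← Real.rpow_add (by norm_num), ← Real.rpow_add_one (by norm_num),
      ← Real.rpow_add (by norm_num)]
    congr 1
    push_cast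
    ring
  have h1 : (1 : ℝ) ≤ 2 ^ p := Real.one_le_rpow (by norm_num) hp0.le
  calc t + t = 1 * (2 * t) := by ring
    _ ≤ 2 ^ p * (2 * t) := by gcongr
    _ = _ := by rw [hr, ht]; field_simp

/-- The approximation estimate (2.8) in the proof of Theorem 2.1. -/
theorem fuzzy_quadratic_approx
    {X Y : Type*} [AddCommGroup X] [Module ℝ X] [AddCommGroup Y] [Module ℝ Y]
    (N : X → ℝ → ℝ) (N' : Y → ℝ → ℝ)
    (hN : IsFuzzyNorm N) (hN' : IsFuzzyNorm N')
    (q p : ℝ) (hq : 0 < q) (hp : p = 1 / q)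
    (f : X → Y)
    (hf : ∀ x y : X, ∀ s t : ℝ, 0 ≤ s → 0 ≤ t →
      min (N x (t ^ q)) (N y (s ^ q)) ≤
        N' (f (x + y) + f (x - y) - 2 • f x - 2 • f y) (t + s)) :
    ∀ n : ℕ, 1 ≤ n → ∀ x : X, ∀ t : ℝ, 0 < t →
      N x (t ^ q / (∑ k ∈ Finset.Icc 1 n, (2 : ℝ) ^ ((k : ℝ) * (p - 2) + 1)) ^ q) ≤
        N' (((4 : ℝ) ^ n)⁻¹ • f (((2 : ℝ) ^ n) • x) - f x) t := by
  subst_vars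
  have key : ∀ n : ℕ, 1 ≤ n → ∀ x : X, ∀ u : ℝ, 0 < u →
      N x (u ^ q) ≤ N' (((4 : ℝ) ^ n)⁻¹ • f (((2 : ℝ) ^ n) • x) - f x)
        ((∑ k ∈ Finset.Icc 1 n, (2 : ℝ) ^ ((k : ℝ) * (1 / q - 2) + 1)) * u) := by
    intro n hn x u hu
    induction n, hn using Nat.le_induction with
    | base => simpa using increment_bound hN hN' hq rfl hf 0 x hu
    | succ n hn ih =>
      have h := (le_min ih (increment_bound hN hN' hq rfl hf n x hu)).trans
        (hN'.min_le_add _ _ _ _)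
      rw [Finset.sum_Icc_succ_top (by omega), add_mul]
      rwa [add_comm (_ - _) (_ - _), sub_add_sub_cancel] at h
  intro n hn x t ht
  have hS : 0 < ∑ k ∈ Finset.Icc 1 n, (2 : ℝ) ^ ((k : ℝ) * (1 / q - 2) + 1) :=
    Finset.sum_pos (fun k _ => by positivity) ⟨1, by simpa using hn⟩
  have h := key n hn x _ (div_pos ht hS)
  rwa [mul_div_cancel₀ _ hS.ne', Real.div_rpow ht.le hS.le] at h
end
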